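/- Let G and H be groups and n ≥ 1. The external tensor product induces a bijection from the disjoint union, over all pairs (p, q) of positive integers with p * q = n, of the product (unitary-equivalence classes of irreducible p-dimensional unitary representations of G) × (unitary-equivalence classes of irreducible q-dimensional unitary representations of H), onto the set of unitary-equivalence classes of irreducible n-dimensional unitary representations of G × H; the map sends the class of (ρ, σ) to the class of ρ ⊠ σ (transported along Fin (p*q) ≃ Fin n). -/

import Mathlib

/-!
The argument rests on Schur's lemma: matrices commuting with an irreducible `ρ` are scalar
(`schur_scalar`), so a nonzero intertwiner `T` between irreducible unitary representations
satisfies `TᴴT = c` and `TTᴴ = c` with `c > 0`, which forces equal dimensions and makes `T / √c` a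
unitary equivalence (`schur_equiv`). The other ingredient is that every nonzero invariant subspace
contains the image of an isometric intertwiner from an irreducible representation
(`exists_irreducible_sub`).

* *Irreducibility of `ρ ⊠ σ`*: the blocks of a matrix commuting with `ρ ⊠ σ` commute with `ρ`,
  hence are scalar; the matrix of these scalars commutes with `σ`, hence is scalar. A
  unitary representation with only scalar commutant is irreducible
  (`irreducible_of_commutant_scalar`).
* *Injectivity*: the blocks of an equivalence `ρ ⊠ σ ≅ ρ' ⊠ σ'` intertwine `ρ` with `ρ'`
  (respectively `σ` with `σ'`), and some block is nonzero.
* *Surjectivity*: given an irreducible `τ` of `G × H`, take an irreducible `ρ` inside `τ|_G`. The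
  space `Hom_G(ρ, τ)` embeds in `ℂⁿ` by evaluation at a basis vector, with `H`-invariant image; an
  irreducible `σ` inside that image yields a nonzero intertwiner `ρ ⊠ σ → τ`, which is an
  equivalence by Schur's lemma.
-/

open Matrix Kronecker

/-- A submodule `W` of `ℂⁿ` is invariant under the unitary representation `ρ`. -/
def RepInvariant {G : Type*} [Group G] {n : ℕ} (ρ : G →* Matrix.unitaryGroup (Fin n) ℂ)
    (W : Submodule ℂ (Fin n → ℂ)) : Prop :=
  ∀ (g : G), ∀ v ∈ W, (ρ g).val.mulVec v ∈ W

/-- A unitary representation is irreducible if it is at least one-dimensional and the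
only invariant submodules are `⊥` and `⊤`. -/
def RepIrreducible {G : Type*} [Group G] {n : ℕ}
    (ρ : G →* Matrix.unitaryGroup (Fin n) ℂ) : Prop :=
  1 ≤ n ∧ ∀ W : Submodule ℂ (Fin n → ℂ), RepInvariant ρ W → W = ⊥ ∨ W = ⊤

/-- Unitary equivalence of two `n`-dimensional unitary representations. -/
def UnitarilyEquivalent {G : Type*} [Group G] {n : ℕ}
    (ρ ρ' : G →* Matrix.unitaryGroup (Fin n) ℂ) : Prop :=
  ∃ A : Matrix.unitaryGroup (Fin n) ℂ, ∀ g : G, ρ' g = A * ρ g * A⁻¹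

lemma kronecker_conjTranspose {p q : ℕ} (A : Matrix (Fin p) (Fin p) ℂ)
    (B : Matrix (Fin q) (Fin q) ℂ) : (A ⊗ₖ B)ᴴ = Aᴴ ⊗ₖ Bᴴ := by
  ext ⟨i, j⟩ ⟨k, l⟩
  simp [Matrix.conjTranspose_apply, mul_comm]

/-- The Kronecker product of unitary matrices, reindexed to be of size `p * q`, is unitary. -/
def kroneckerUnitary {p q : ℕ} (A : Matrix.unitaryGroup (Fin p) ℂ)
    (B : Matrix.unitaryGroup (Fin q) ℂ) : Matrix.unitaryGroup (Fin (p * q)) ℂ :=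
  ⟨Matrix.reindex finProdFinEquiv finProdFinEquiv (A.val ⊗ₖ B.val), by
    constructor
    · show star (Matrix.reindex finProdFinEquiv finProdFinEquiv (A.val ⊗ₖ B.val)) *
        (Matrix.reindex finProdFinEquiv finProdFinEquiv (A.val ⊗ₖ B.val)) = 1
      have hs : star (Matrix.reindex finProdFinEquiv finProdFinEquiv (A.val ⊗ₖ B.val)) =
          Matrix.reindex finProdFinEquiv finProdFinEquiv ((star A.val) ⊗ₖ (star B.val)) := by
        show (Matrix.reindex finProdFinEquiv finProdFinEquiv (A.val ⊗ₖ B.val))ᴴ = _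
        rw [Matrix.reindex_apply, Matrix.reindex_apply, Matrix.conjTranspose_submatrix,
          Matrix.star_eq_conjTranspose, Matrix.star_eq_conjTranspose, ← kronecker_conjTranspose]
      rw [hs, Matrix.reindex_apply, Matrix.reindex_apply, Matrix.submatrix_mul_equiv,
        ← Matrix.mul_kronecker_mul]
      have h1 : star A.val * A.val = 1 := A.2.1
      have h2 : star B.val * B.val = 1 := B.2.1
      rw [h1, h2, Matrix.one_kronecker_one, Matrix.submatrix_one_equiv]
    · show (Matrix.reindex finProdFinEquiv finProdFinEquiv (A.val ⊗ₖ B.val)) *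
        star (Matrix.reindex finProdFinEquiv finProdFinEquiv (A.val ⊗ₖ B.val)) = 1
      have hs : star (Matrix.reindex finProdFinEquiv finProdFinEquiv (A.val ⊗ₖ B.val)) =
          Matrix.reindex finProdFinEquiv finProdFinEquiv ((star A.val) ⊗ₖ (star B.val)) := by
        show (Matrix.reindex finProdFinEquiv finProdFinEquiv (A.val ⊗ₖ B.val))ᴴ = _
        rw [Matrix.reindex_apply, Matrix.reindex_apply, Matrix.conjTranspose_submatrix,
          Matrix.star_eq_conjTranspose, Matrix.star_eq_conjTranspose, ← kronecker_conjTranspose]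
      rw [hs, Matrix.reindex_apply, Matrix.reindex_apply, Matrix.submatrix_mul_equiv,
        ← Matrix.mul_kronecker_mul]
      have h1 : A.val * star A.val = 1 := A.2.2
      have h2 : B.val * star B.val = 1 := B.2.2
      rw [h1, h2, Matrix.one_kronecker_one, Matrix.submatrix_one_equiv]⟩

/-- The external tensor product of unitary representations. -/
def extTensor {G H : Type*} [Group G] [Group H] {p q : ℕ}
    (ρ : G →* Matrix.unitaryGroup (Fin p) ℂ) (σ : H →* Matrix.unitaryGroup (Fin q) ℂ) :
    (G × H) →* Matrix.unitaryGroup (Fin (p * q)) ℂ where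
  toFun x := kroneckerUnitary (ρ x.1) (σ x.2)
  map_one' := by
    apply Subtype.ext
    show Matrix.reindex finProdFinEquiv finProdFinEquiv ((ρ 1).val ⊗ₖ (σ 1).val) = 1
    rw [map_one ρ, map_one σ]
    show Matrix.reindex finProdFinEquiv finProdFinEquiv
      ((1 : Matrix (Fin p) (Fin p) ℂ) ⊗ₖ (1 : Matrix (Fin q) (Fin q) ℂ)) = 1
    rw [Matrix.one_kronecker_one, Matrix.reindex_apply, Matrix.submatrix_one_equiv]
  map_mul' x y := by
    apply Subtype.ext
    show Matrix.reindex finProdFinEquiv finProdFinEquiv ((ρ (x.1 * y.1)).val ⊗ₖ (σ (x.2 * y.2)).val)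
      = Matrix.reindex finProdFinEquiv finProdFinEquiv ((ρ x.1).val ⊗ₖ (σ x.2).val) *
        Matrix.reindex finProdFinEquiv finProdFinEquiv ((ρ y.1).val ⊗ₖ (σ y.2).val)
    rw [map_mul ρ, map_mul σ]
    rw [Matrix.reindex_apply, Matrix.reindex_apply, Matrix.reindex_apply,
      Matrix.submatrix_mul_equiv, ← Matrix.mul_kronecker_mul]
    rfl

/-- Transport of a unitary representation along an equality of dimensions. -/
def transportRep {G : Type*} [Group G] {m n : ℕ} (h : m = n)
    (ρ : G →* Matrix.unitaryGroup (Fin m) ℂ) : G →* Matrix.unitaryGroup (Fin n) ℂ :=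
  h ▸ ρ

/-- The type of irreducible `n`-dimensional unitary representations of `G`. -/
def IrrRep (G : Type*) [Group G] (n : ℕ) : Type _ :=
  {ρ : G →* Matrix.unitaryGroup (Fin n) ℂ // RepIrreducible ρ}

/-- Unitary-equivalence classes of `n`-dimensional unitary representations of `G`. -/
def RepClass (G : Type*) [Group G] (n : ℕ) : Type _ :=
  Quot (fun ρ σ : G →* Matrix.unitaryGroup (Fin n) ℂ => UnitarilyEquivalent ρ σ)

/-- Unitary-equivalence classes of irreducible `n`-dimensional unitary representations. -/
def IrrClass (G : Type*) [Group G] (n : ℕ) : Type _ :=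
  Quot (fun ρ σ : IrrRep G n => UnitarilyEquivalent ρ.1 σ.1)

/-! ### Schur's lemma -/

section Schur

open scoped ComplexOrder

variable {G : Type*} [Group G]

lemma unitaryEquiv_equivalence (n : ℕ) :
    Equivalence (fun ρ σ : G →* Matrix.unitaryGroup (Fin n) ℂ => UnitarilyEquivalent ρ σ) where
  refl ρ := ⟨1, fun g => by simp⟩
  symm := by
    rintro ρ σ ⟨A, hA⟩
    exact ⟨A⁻¹, fun g => by rw [hA]; group⟩
  trans := by
    rintro ρ σ τ ⟨A, hA⟩ ⟨B, hB⟩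
    exact ⟨B * A, fun g => by rw [hB, hA]; group⟩

lemma rep_inv_val {n : ℕ} (ρ : G →* Matrix.unitaryGroup (Fin n) ℂ) (g : G) :
    (ρ g⁻¹).val = (ρ g).valᴴ := by
  rw [map_inv]; rfl

/-- The adjoint of an intertwiner between unitary representations is an intertwiner in the
opposite direction. -/
lemma intertwiner_adjoint {m n : ℕ} {ρ : G →* Matrix.unitaryGroup (Fin m) ℂ}
    {π : G →* Matrix.unitaryGroup (Fin n) ℂ} {T : Matrix (Fin n) (Fin m) ℂ}
    (hT : ∀ g, T * (ρ g).val = (π g).val * T) (g : G) :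
    Tᴴ * (π g).val = (ρ g).val * Tᴴ := by
  have h := congrArg Matrix.conjTranspose (hT g⁻¹)
  rw [Matrix.conjTranspose_mul, Matrix.conjTranspose_mul, rep_inv_val, rep_inv_val,
    Matrix.conjTranspose_conjTranspose, Matrix.conjTranspose_conjTranspose] at h
  exact h.symm

lemma schur_scalar {p : ℕ} {ρ : G →* Matrix.unitaryGroup (Fin p) ℂ} (hρ : RepIrreducible ρ)
    (S : Matrix (Fin p) (Fin p) ℂ) (hS : ∀ g, S * (ρ g).val = (ρ g).val * S) :
    ∃ c : ℂ, S = c • 1 := by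
  obtain ⟨hp, hirr⟩ := hρ
  have : Nonempty (Fin p) := ⟨⟨0, hp⟩⟩
  obtain ⟨c, hc⟩ := Module.End.exists_eigenvalue (Matrix.toLin' S)
  have hinv : RepInvariant ρ (Module.End.eigenspace (Matrix.toLin' S) c) := by
    intro g v hv
    rw [Module.End.mem_eigenspace_iff, Matrix.toLin'_apply] at hv ⊢
    rw [Matrix.mulVec_mulVec, hS, ← Matrix.mulVec_mulVec, hv, Matrix.mulVec_smul]
  have htop := (hirr _ hinv).resolve_left hc
  refine ⟨c, ?_⟩
  apply Matrix.toLin'.injective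
  ext1 i
  ext1
  have hv : Pi.single i (1 : ℂ) ∈ Module.End.eigenspace (Matrix.toLin' S) c := by
    rw [htop]; trivial
  rw [Module.End.mem_eigenspace_iff] at hv
  simpa using hv

lemma transportRep_val {m n : ℕ} (h : m = n) (ρ : G →* Matrix.unitaryGroup (Fin m) ℂ) (g : G) :
    (transportRep h ρ g).val = Matrix.reindex (finCongr h) (finCongr h) (ρ g).val := by
  subst h; rfl

lemma transportRep_irreducible {m n : ℕ} (h : m = n) {ρ : G →* Matrix.unitaryGroup (Fin m) ℂ}
    (hρ : RepIrreducible ρ) : RepIrreducible (transportRep h ρ) := by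
  subst h; exact hρ

/-- A nonzero intertwiner between irreducible unitary representations forces them to have the same
dimension and to be unitarily equivalent. -/
lemma schur_equiv {p m : ℕ} {ρ : G →* Matrix.unitaryGroup (Fin p) ℂ}
    {π : G →* Matrix.unitaryGroup (Fin m) ℂ} (hρ : RepIrreducible ρ) (hπ : RepIrreducible π)
    (T : Matrix (Fin m) (Fin p) ℂ) (hT0 : T ≠ 0)
    (hT : ∀ g, T * (ρ g).val = (π g).val * T) :
    ∃ h : p = m, UnitarilyEquivalent (transportRep h ρ) π := by
  have hT' := intertwiner_adjoint hT
  obtain ⟨c, hc⟩ := schur_scalar hρ (Tᴴ * T) (fun g => by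
    rw [Matrix.mul_assoc, hT, ← Matrix.mul_assoc, hT', Matrix.mul_assoc])
  obtain ⟨d, hd⟩ := schur_scalar hπ (T * Tᴴ) (fun g => by
    rw [Matrix.mul_assoc, hT', ← Matrix.mul_assoc, hT, Matrix.mul_assoc])
  have hc0 : c ≠ 0 := by
    rintro rfl
    rw [zero_smul, Matrix.conjTranspose_mul_self_eq_zero] at hc
    exact hT0 hc
  -- compare `T (Tᴴ T) = (T Tᴴ) T`
  have hcd : c = d := by
    have h1 : c • T = d • T := by
      calc c • T = T * (Tᴴ * T) := by rw [hc]; simp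
        _ = (T * Tᴴ) * T := by rw [Matrix.mul_assoc]
        _ = d • T := by rw [hd]; simp
    exact smul_left_injective ℂ hT0 h1
  subst hcd
  -- the two scalar matrices have the same trace
  have hpm : p = m := by
    have h := Matrix.trace_mul_comm Tᴴ T
    rw [hc, hd] at h
    simp only [Matrix.trace_smul, Matrix.trace_one, Fintype.card_fin, smul_eq_mul] at h
    exact_mod_cast mul_left_cancel₀ hc0 h
  subst hpm
  refine ⟨rfl, ?_⟩
  have hcnn : 0 ≤ c := by
    have h := (Matrix.posSemidef_conjTranspose_mul_self T).diag_nonneg (i := ⟨0, hρ.1⟩)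
    rw [hc] at h
    simpa using h
  obtain ⟨r, hr0, hrc⟩ : ∃ r : ℝ, 0 ≤ r ∧ (r : ℂ) = c := ⟨c.re, (Complex.le_def.1 hcnn).1, by
    apply Complex.ext
    · simp
    · simpa using (Complex.le_def.1 hcnn).2⟩
  have hsq : ((Real.sqrt r : ℝ) : ℂ) * (Real.sqrt r : ℝ) = c := by
    rw [← Complex.ofReal_mul, Real.mul_self_sqrt hr0, hrc]
  have hs0 : ((Real.sqrt r : ℝ) : ℂ) ≠ 0 := by
    intro h; rw [h] at hsq; exact hc0 (by rw [← hsq]; simp)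
  set s : ℂ := ((Real.sqrt r : ℝ) : ℂ) with hs
  have hstar : star s = s := by rw [hs]; exact Complex.conj_ofReal _
  have hU : s⁻¹ • T ∈ Matrix.unitaryGroup (Fin p) ℂ := by
    rw [Matrix.mem_unitaryGroup_iff', Matrix.star_eq_conjTranspose, Matrix.conjTranspose_smul,
      star_inv₀, hstar, Matrix.smul_mul, Matrix.mul_smul, hc, smul_smul, smul_smul, ← hsq]
    rw [show s⁻¹ * s⁻¹ * (s * s) = 1 by field_simp, one_smul]
  refine ⟨⟨_, hU⟩, fun g => ?_⟩
  rw [eq_mul_inv_iff_mul_eq]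
  apply Subtype.ext
  change (π g).val * (s⁻¹ • T) = (s⁻¹ • T) * (ρ g).val
  rw [Matrix.mul_smul, Matrix.smul_mul, hT]

end Schur

/-! ### Irreducible subrepresentations -/

section Sub

open scoped ComplexOrder

variable {G : Type*} [Group G]

/-- Every subspace of `ℂⁿ` is the range of a matrix with orthonormal columns. -/
lemma exists_isometry_onto {n : ℕ} (W : Submodule ℂ (Fin n → ℂ)) :
    ∃ (p : ℕ) (T : Matrix (Fin n) (Fin p) ℂ), Tᴴ * T = 1 ∧ (∀ v, T *ᵥ v ∈ W) ∧
      ∀ w ∈ W, ∃ v, T *ᵥ v = w := by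
  -- orthonormality lives in `EuclideanSpace`, so `W` is moved there
  set e := (WithLp.linearEquiv 2 ℂ (Fin n → ℂ)).symm with he
  set W' : Submodule ℂ (EuclideanSpace ℂ (Fin n)) := W.map e.toLinearMap with hW'
  set b := stdOrthonormalBasis ℂ W'
  have hmem : ∀ k, (b k : EuclideanSpace ℂ (Fin n)).ofLp ∈ W := by
    intro k
    obtain ⟨w, hw, hwe⟩ := (b k).2
    rw [← hwe]; exact hw
  have hcomb : ∀ v : Fin (Module.finrank ℂ W') → ℂ,
      (Matrix.of fun i k => (b k : EuclideanSpace ℂ (Fin n)).ofLp i) *ᵥ v =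
        ∑ k, v k • (b k : EuclideanSpace ℂ (Fin n)).ofLp := by
    intro v
    ext i
    simp [Matrix.mulVec, dotProduct, Finset.sum_apply, mul_comm]
  refine ⟨Module.finrank ℂ W', Matrix.of fun i k => (b k : EuclideanSpace ℂ (Fin n)).ofLp i,
    ?_, ?_, ?_⟩
  · ext j k
    have h := orthonormal_iff_ite.1 b.orthonormal j k
    rw [Submodule.coe_inner, EuclideanSpace.inner_eq_star_dotProduct] at h
    rw [Matrix.one_apply, ← h]
    simp [Matrix.mul_apply, dotProduct, mul_comm]
  · intro v
    rw [hcomb]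
    exact Submodule.sum_mem _ fun k _ => W.smul_mem _ (hmem k)
  · intro w hw
    refine ⟨fun k => b.repr ⟨e w, Submodule.mem_map_of_mem hw⟩ k, ?_⟩
    rw [hcomb]
    have h := congrArg (fun x : W' => e.symm (x : EuclideanSpace ℂ (Fin n)))
      (b.sum_repr ⟨e w, Submodule.mem_map_of_mem hw⟩)
    simp only [Submodule.coe_sum, Submodule.coe_smul, map_sum, map_smul,
      LinearEquiv.symm_apply_apply] at h
    exact h

/-- Every nonzero invariant subspace contains the image of an isometric intertwiner from an
irreducible representation, obtained by restricting to a minimal nonzero invariant subspace. -/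
lemma exists_irreducible_sub {n : ℕ} (π : G →* Matrix.unitaryGroup (Fin n) ℂ)
    (W : Submodule ℂ (Fin n → ℂ)) (hW : RepInvariant π W) (hW0 : W ≠ ⊥) :
    ∃ (p : ℕ) (ρ : G →* Matrix.unitaryGroup (Fin p) ℂ) (T : Matrix (Fin n) (Fin p) ℂ),
      RepIrreducible ρ ∧ Tᴴ * T = 1 ∧ (∀ g, T * (ρ g).val = (π g).val * T) ∧
      ∀ v, T *ᵥ v ∈ W := by
  obtain ⟨W₀, ⟨hle, hinv, hne⟩, hmin⟩ := (wellFounded_lt (α := Submodule ℂ (Fin n → ℂ))).has_min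
    {V | V ≤ W ∧ RepInvariant π V ∧ V ≠ ⊥} ⟨W, le_rfl, hW, hW0⟩
  obtain ⟨p, T, hTT, hTmem, hTsurj⟩ := exists_isometry_onto W₀
  have hproj : ∀ w ∈ W₀, (T * Tᴴ) *ᵥ w = w := by
    intro w hw
    obtain ⟨v, rfl⟩ := hTsurj w hw
    rw [Matrix.mulVec_mulVec, Matrix.mul_assoc, hTT, Matrix.mul_one]
  have hint : ∀ g, T * (Tᴴ * (π g).val * T) = (π g).val * T := by
    intro g
    apply Matrix.toLin'.injective
    apply LinearMap.ext
    intro v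
    rw [Matrix.toLin'_apply, Matrix.toLin'_apply]
    have h := hproj _ (hinv g _ (hTmem v))
    simpa [Matrix.mulVec_mulVec, Matrix.mul_assoc] using h
  have hmul : ∀ g h, Tᴴ * (π (g * h)).val * T = (Tᴴ * (π g).val * T) * (Tᴴ * (π h).val * T) := by
    intro g h
    rw [Matrix.mul_assoc (Tᴴ * (π g).val) T, hint, map_mul]
    simp [Matrix.mul_assoc]
  have hone : Tᴴ * (π 1).val * T = 1 := by
    rw [map_one]; simpa using hTT
  have hstar : ∀ g, (Tᴴ * (π g).val * T)ᴴ = Tᴴ * (π g⁻¹).val * T := by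
    intro g
    rw [rep_inv_val, Matrix.conjTranspose_mul, Matrix.conjTranspose_mul,
      Matrix.conjTranspose_conjTranspose, Matrix.mul_assoc]
  let ρ : G →* Matrix.unitaryGroup (Fin p) ℂ :=
    { toFun := fun g => ⟨Tᴴ * (π g).val * T, by
        rw [Matrix.mem_unitaryGroup_iff, Matrix.star_eq_conjTranspose, hstar, ← hmul,
          mul_inv_cancel, hone]⟩
      map_one' := Subtype.ext hone
      map_mul' := fun g h => Subtype.ext (hmul g h) }
  have hρ : ∀ g, T * (ρ g).val = (π g).val * T := hint
  have hinj : ∀ v, Tᴴ *ᵥ (T *ᵥ v) = v := by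
    intro v; rw [Matrix.mulVec_mulVec, hTT, Matrix.one_mulVec]
  refine ⟨p, ρ, T, ⟨?_, ?_⟩, hTT, hρ, fun v => hle (hTmem v)⟩
  · rcases Nat.eq_zero_or_pos p with rfl | h
    · exfalso
      apply hne
      rw [Submodule.eq_bot_iff]
      intro w hw
      obtain ⟨v, rfl⟩ := hTsurj w hw
      rw [Subsingleton.elim v 0, Matrix.mulVec_zero]
    · exact h
  · intro K hK
    by_cases hK0 : K = ⊥
    · exact Or.inl hK0
    right
    have hle' : K.map (Matrix.toLin' T) ≤ W₀ := by
      rintro _ ⟨v, _, rfl⟩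
      exact hTmem v
    have hKinv : RepInvariant π (K.map (Matrix.toLin' T)) := by
      rintro g _ ⟨v, hv, rfl⟩
      refine ⟨(ρ g).val *ᵥ v, hK g v hv, ?_⟩
      rw [Matrix.toLin'_apply, Matrix.toLin'_apply, Matrix.mulVec_mulVec, hρ,
        Matrix.mulVec_mulVec]
    have hKne : K.map (Matrix.toLin' T) ≠ ⊥ := by
      intro h
      apply hK0
      rw [Submodule.eq_bot_iff] at h ⊢
      intro v hv
      have h1 := h _ (Submodule.mem_map_of_mem hv)
      rw [Matrix.toLin'_apply] at h1
      rw [← hinj v, h1, Matrix.mulVec_zero]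
    have hnlt := hmin _ ⟨hle'.trans hle, hKinv, hKne⟩
    have heq : K.map (Matrix.toLin' T) = W₀ := by
      by_contra hcon
      exact hnlt (lt_of_le_of_ne hle' hcon)
    rw [Submodule.eq_top_iff']
    intro v
    have hv := hTmem v
    rw [← heq] at hv
    obtain ⟨u, hu, huv⟩ := hv
    rw [Matrix.toLin'_apply] at huv
    rw [← hinj v, ← huv, hinj]
    exact hu

lemma irreducible_of_commutant_scalar {n : ℕ} (hn : 1 ≤ n)
    (π : G →* Matrix.unitaryGroup (Fin n) ℂ)
    (h : ∀ S : Matrix (Fin n) (Fin n) ℂ, (∀ g, S * (π g).val = (π g).val * S) →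
      ∃ c : ℂ, S = c • 1) : RepIrreducible π := by
  refine ⟨hn, fun W hW => ?_⟩
  by_cases hW0 : W = ⊥
  · exact Or.inl hW0
  right
  obtain ⟨p, ρ, T, hρ, hTT, hT, hmem⟩ := exists_irreducible_sub π W hW hW0
  have hT' := intertwiner_adjoint hT
  obtain ⟨c, hc⟩ := h (T * Tᴴ) (fun g => by
    rw [Matrix.mul_assoc, hT', ← Matrix.mul_assoc, hT, Matrix.mul_assoc])
  have hc0 : c ≠ 0 := by
    rintro rfl
    rw [zero_smul, Matrix.self_mul_conjTranspose_eq_zero] at hc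
    rw [hc, Matrix.mul_zero] at hTT
    have := congrFun (congrFun hTT ⟨0, hρ.1⟩) ⟨0, hρ.1⟩
    simp at this
  rw [Submodule.eq_top_iff']
  intro v
  have hv := hmem (c⁻¹ • (Tᴴ *ᵥ v))
  rw [Matrix.mulVec_smul, Matrix.mulVec_mulVec, hc, Matrix.smul_mulVec, Matrix.one_mulVec,
    smul_smul, inv_mul_cancel₀ hc0, one_smul] at hv
  exact hv

end Sub

/-! ### External tensor products -/

section Tensor

open scoped ComplexOrder

variable {G H : Type*} [Group G] [Group H]

/-- Coordinates `Fin p × Fin q` on the space of the transported external tensor product. -/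
def tensorIdx {p q n : ℕ} (h : p * q = n) : Fin p × Fin q ≃ Fin n :=
  finProdFinEquiv.trans (finCongr h)

lemma transport_extTensor_val {p q n : ℕ} (h : p * q = n)
    (ρ : G →* Matrix.unitaryGroup (Fin p) ℂ) (σ : H →* Matrix.unitaryGroup (Fin q) ℂ)
    (x : G × H) :
    (transportRep h (extTensor ρ σ) x).val =
      ((ρ x.1).val ⊗ₖ (σ x.2).val).submatrix (tensorIdx h).symm (tensorIdx h).symm := by
  rw [transportRep_val]; rfl

/-- An intertwiner of external tensor products, restricted to `G × 1` and read in blocks. -/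
lemma block_left {p q p' q' n n' : ℕ} (h : p * q = n) (h' : p' * q' = n')
    {ρ : G →* Matrix.unitaryGroup (Fin p) ℂ} {σ : H →* Matrix.unitaryGroup (Fin q) ℂ}
    {ρ' : G →* Matrix.unitaryGroup (Fin p') ℂ} {σ' : H →* Matrix.unitaryGroup (Fin q') ℂ}
    {A : Matrix (Fin n') (Fin n) ℂ}
    (hA : ∀ x, A * (transportRep h (extTensor ρ σ) x).val =
      (transportRep h' (extTensor ρ' σ') x).val * A) (j' : Fin q') (j : Fin q) (g : G) :
    A.submatrix (fun i' => tensorIdx h' (i', j')) (fun i => tensorIdx h (i, j)) * (ρ g).val =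
      (ρ' g).val * A.submatrix (fun i' => tensorIdx h' (i', j'))
        (fun i => tensorIdx h (i, j)) := by
  ext a b
  have h1 := congrFun (congrFun (hA (g, 1)) (tensorIdx h' (a, j'))) (tensorIdx h (b, j))
  rw [transport_extTensor_val, transport_extTensor_val, Matrix.mul_apply, Matrix.mul_apply,
    ← (tensorIdx h).sum_comp, ← (tensorIdx h').sum_comp, Fintype.sum_prod_type,
    Fintype.sum_prod_type] at h1
  simpa [Matrix.mul_apply, Matrix.one_apply] using h1

/-- The analogue of `block_left` for the restriction to `1 × H`. -/
lemma block_right {p q p' q' n n' : ℕ} (h : p * q = n) (h' : p' * q' = n')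
    {ρ : G →* Matrix.unitaryGroup (Fin p) ℂ} {σ : H →* Matrix.unitaryGroup (Fin q) ℂ}
    {ρ' : G →* Matrix.unitaryGroup (Fin p') ℂ} {σ' : H →* Matrix.unitaryGroup (Fin q') ℂ}
    {A : Matrix (Fin n') (Fin n) ℂ}
    (hA : ∀ x, A * (transportRep h (extTensor ρ σ) x).val =
      (transportRep h' (extTensor ρ' σ') x).val * A) (i' : Fin p') (i : Fin p) (k : H) :
    A.submatrix (fun j' => tensorIdx h' (i', j')) (fun j => tensorIdx h (i, j)) * (σ k).val =
      (σ' k).val * A.submatrix (fun j' => tensorIdx h' (i', j'))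
        (fun j => tensorIdx h (i, j)) := by
  ext a b
  have h1 := congrFun (congrFun (hA (1, k)) (tensorIdx h' (i', a))) (tensorIdx h (i, b))
  rw [transport_extTensor_val, transport_extTensor_val, Matrix.mul_apply, Matrix.mul_apply,
    ← (tensorIdx h).sum_comp, ← (tensorIdx h').sum_comp, Fintype.sum_prod_type_right,
    Fintype.sum_prod_type_right] at h1
  simpa [Matrix.mul_apply, Matrix.one_apply] using h1

lemma extTensor_irreducible {p q : ℕ} {ρ : G →* Matrix.unitaryGroup (Fin p) ℂ}
    {σ : H →* Matrix.unitaryGroup (Fin q) ℂ} (hρ : RepIrreducible ρ) (hσ : RepIrreducible σ) :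
    RepIrreducible (extTensor ρ σ) := by
  refine irreducible_of_commutant_scalar (Nat.mul_pos hρ.1 hσ.1) _ fun S hS => ?_
  have h1 := fun j' j => schur_scalar hρ _ (block_left rfl rfl hS j' j)
  have h2 := fun i' i => schur_scalar hσ _ (block_right rfl rfl hS i' i)
  choose c hc using h1
  choose d hd using h2
  have hc' : ∀ i' j' i j, S (tensorIdx rfl (i', j')) (tensorIdx rfl (i, j)) =
      if i' = i then c j' j else 0 := by
    intro i' j' i j
    have := congrFun (congrFun (hc j' j) i') i
    simpa [Matrix.one_apply] using this
  have hd' : ∀ i' j' i j, S (tensorIdx rfl (i', j')) (tensorIdx rfl (i, j)) =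
      if j' = j then d i' i else 0 := by
    intro i' j' i j
    have := congrFun (congrFun (hd i' i) j') j
    simpa [Matrix.one_apply] using this
  refine ⟨c ⟨0, hσ.1⟩ ⟨0, hσ.1⟩, ?_⟩
  ext x y
  obtain ⟨⟨i', j'⟩, rfl⟩ := (tensorIdx (rfl : p * q = p * q)).surjective x
  obtain ⟨⟨i, j⟩, rfl⟩ := (tensorIdx (rfl : p * q = p * q)).surjective y
  -- on the diagonal, `c j j = d i i = c 0 0`
  have e1 := hc' i' j' i j
  have e2 := hd' i' j' i j
  have e3 := hc' i ⟨0, hσ.1⟩ i ⟨0, hσ.1⟩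
  have e4 := hd' i ⟨0, hσ.1⟩ i ⟨0, hσ.1⟩
  by_cases hi : i' = i
  · by_cases hj : j' = j
    · subst hi hj
      simp only [if_true] at e1 e2 e3 e4
      simp [e2, ← e3, e4]
    · rw [e2, if_neg hj]
      simp [hj]
  · rw [e1, if_neg hi]
    simp [hi]

lemma extTensor_congr {p q n : ℕ} (h : p * q = n) {ρ ρ' : G →* Matrix.unitaryGroup (Fin p) ℂ}
    {σ σ' : H →* Matrix.unitaryGroup (Fin q) ℂ} (hρ : UnitarilyEquivalent ρ ρ')
    (hσ : UnitarilyEquivalent σ σ') :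
    UnitarilyEquivalent (transportRep h (extTensor ρ σ)) (transportRep h (extTensor ρ' σ')) := by
  subst h
  obtain ⟨A, hA⟩ := hρ
  obtain ⟨B, hB⟩ := hσ
  refine ⟨kroneckerUnitary A B, fun x => ?_⟩
  rw [eq_mul_inv_iff_mul_eq]
  have hA' : ρ' x.1 * A = A * ρ x.1 := by rw [hA]; group
  have hB' : σ' x.2 * B = B * σ x.2 := by rw [hB]; group
  apply Subtype.ext
  change ((ρ' x.1).val ⊗ₖ (σ' x.2).val).submatrix finProdFinEquiv.symm finProdFinEquiv.symm *
      (A.val ⊗ₖ B.val).submatrix finProdFinEquiv.symm finProdFinEquiv.symm =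
    (A.val ⊗ₖ B.val).submatrix finProdFinEquiv.symm finProdFinEquiv.symm *
      ((ρ x.1).val ⊗ₖ (σ x.2).val).submatrix finProdFinEquiv.symm finProdFinEquiv.symm
  rw [Matrix.submatrix_mul_equiv, Matrix.submatrix_mul_equiv, ← Matrix.mul_kronecker_mul,
    ← Matrix.mul_kronecker_mul]
  congr 2
  · exact congrArg Subtype.val hA'
  · exact congrArg Subtype.val hB'

lemma extTensor_factors_unique {p q p' q' n : ℕ} (h : p * q = n) (h' : p' * q' = n)
    {ρ : G →* Matrix.unitaryGroup (Fin p) ℂ} {σ : H →* Matrix.unitaryGroup (Fin q) ℂ}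
    {ρ' : G →* Matrix.unitaryGroup (Fin p') ℂ} {σ' : H →* Matrix.unitaryGroup (Fin q') ℂ}
    (hρ : RepIrreducible ρ) (hσ : RepIrreducible σ) (hρ' : RepIrreducible ρ')
    (hσ' : RepIrreducible σ')
    (he : UnitarilyEquivalent (transportRep h (extTensor ρ σ))
      (transportRep h' (extTensor ρ' σ'))) :
    (∃ e : p = p', UnitarilyEquivalent (transportRep e ρ) ρ') ∧
      ∃ e : q = q', UnitarilyEquivalent (transportRep e σ) σ' := by
  obtain ⟨U, hU⟩ := he
  have hA : ∀ x, U.val * (transportRep h (extTensor ρ σ) x).val =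
      (transportRep h' (extTensor ρ' σ') x).val * U.val := by
    intro x
    have : U * transportRep h (extTensor ρ σ) x = transportRep h' (extTensor ρ' σ') x * U := by
      rw [hU]; group
    exact congrArg Subtype.val this
  have hU0 : U.val ≠ 0 := by
    intro h0
    have h1 : star U.val * U.val = 1 := U.2.1
    have hn : 0 < n := h ▸ Nat.mul_pos hρ.1 hσ.1
    rw [h0, Matrix.mul_zero] at h1
    have := congrFun (congrFun h1 ⟨0, hn⟩) ⟨0, hn⟩
    simp at this
  obtain ⟨x, y, hxy⟩ : ∃ x y, U.val x y ≠ 0 := by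
    by_contra! hcon
    exact hU0 (by ext x y; exact hcon x y)
  obtain ⟨⟨i', j'⟩, rfl⟩ := (tensorIdx h').surjective x
  obtain ⟨⟨i, j⟩, rfl⟩ := (tensorIdx h).surjective y
  exact ⟨schur_equiv hρ hρ' _ (fun h0 => hxy (congrFun (congrFun h0 i') i))
      (block_left h h' hA j' j),
    schur_equiv hσ hσ' _ (fun h0 => hxy (congrFun (congrFun h0 j') j))
      (block_right h h' hA i' i)⟩

lemma exists_extTensor_equiv {n : ℕ} {τ : (G × H) →* Matrix.unitaryGroup (Fin n) ℂ}
    (hτ : RepIrreducible τ) :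
    ∃ (p q : ℕ) (h : p * q = n) (ρ : G →* Matrix.unitaryGroup (Fin p) ℂ)
      (σ : H →* Matrix.unitaryGroup (Fin q) ℂ), RepIrreducible ρ ∧ RepIrreducible σ ∧
      UnitarilyEquivalent (transportRep h (extTensor ρ σ)) τ := by
  have hn := hτ.1
  have : Nonempty (Fin n) := ⟨⟨0, hn⟩⟩
  have hcomm : ∀ g k, (τ (g, 1)).val * (τ (1, k)).val = (τ (1, k)).val * (τ (g, 1)).val := by
    intro g k
    have : τ (g, 1) * τ (1, k) = τ (1, k) * τ (g, 1) := by
      rw [← map_mul, ← map_mul]; simp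
    exact congrArg Subtype.val this
  have hsplit : ∀ g k, (τ (g, k)).val = (τ (g, 1)).val * (τ (1, k)).val := by
    intro g k
    have : τ (g, k) = τ (g, 1) * τ (1, k) := by
      rw [← map_mul]; simp
    exact congrArg Subtype.val this
  obtain ⟨p, ρ, T₀, hρ, hT₀T₀, hT₀, -⟩ := exists_irreducible_sub
    (τ.comp (MonoidHom.inl G H)) ⊤ (fun _ _ _ => trivial) top_ne_bot
  replace hT₀ : ∀ g, T₀ * (ρ g).val = (τ (g, 1)).val * T₀ := hT₀
  let e₀ : Fin p → ℂ := Pi.single ⟨0, hρ.1⟩ 1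
  have he₀ : e₀ ≠ 0 := fun h0 => by
    have := congrFun h0 ⟨0, hρ.1⟩
    simp [e₀] at this
  -- evaluation at `e₀` is injective on intertwiners, because `DᴴD` is scalar
  have heval : ∀ D : Matrix (Fin n) (Fin p) ℂ, (∀ g, D * (ρ g).val = (τ (g, 1)).val * D) →
      D *ᵥ e₀ = 0 → D = 0 := by
    intro D hD hD0
    have hD' := intertwiner_adjoint (π := τ.comp (MonoidHom.inl G H)) hD
    replace hD' : ∀ g, Dᴴ * (τ (g, 1)).val = (ρ g).val * Dᴴ := hD'
    obtain ⟨c, hc⟩ := schur_scalar hρ (Dᴴ * D) (fun g => by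
      rw [Matrix.mul_assoc, hD, ← Matrix.mul_assoc, hD', Matrix.mul_assoc])
    have h0 : c • e₀ = 0 := by
      have h1 : (Dᴴ * D) *ᵥ e₀ = 0 := by
        rw [← Matrix.mulVec_mulVec, hD0, Matrix.mulVec_zero]
      rwa [hc, Matrix.smul_mulVec, Matrix.one_mulVec] at h1
    rw [(smul_eq_zero.1 h0).resolve_right he₀, zero_smul,
      Matrix.conjTranspose_mul_self_eq_zero] at hc
    exact hc
  -- the image of `Hom_G(ρ, τ)` under evaluation at `e₀`
  let M : Submodule ℂ (Fin n → ℂ) :=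
    { carrier := {v | ∃ D : Matrix (Fin n) (Fin p) ℂ,
        (∀ g, D * (ρ g).val = (τ (g, 1)).val * D) ∧ D *ᵥ e₀ = v}
      zero_mem' := ⟨0, fun g => by simp, by simp⟩
      add_mem' := by
        rintro _ _ ⟨D, hD, rfl⟩ ⟨E, hE, rfl⟩
        exact ⟨D + E, fun g => by rw [Matrix.add_mul, Matrix.mul_add, hD, hE],
          Matrix.add_mulVec _ _ _⟩
      smul_mem' := by
        rintro c _ ⟨D, hD, rfl⟩
        exact ⟨c • D, fun g => by rw [Matrix.smul_mul, Matrix.mul_smul, hD],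
          Matrix.smul_mulVec _ _ _⟩ }
  have hMinv : RepInvariant (τ.comp (MonoidHom.inr G H)) M := by
    rintro k _ ⟨D, hD, rfl⟩
    refine ⟨(τ (1, k)).val * D, fun g => ?_, ?_⟩
    · rw [Matrix.mul_assoc, hD, ← Matrix.mul_assoc, ← hcomm, Matrix.mul_assoc]
    · rw [← Matrix.mulVec_mulVec]; rfl
  have hM0 : M ≠ ⊥ := by
    intro h
    have h1 : T₀ *ᵥ e₀ ∈ M := ⟨T₀, hT₀, rfl⟩
    rw [h, Submodule.mem_bot] at h1
    have h2 : (T₀ᴴ * T₀) *ᵥ e₀ = 0 := by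
      rw [← Matrix.mulVec_mulVec, h1, Matrix.mulVec_zero]
    rw [hT₀T₀, Matrix.one_mulVec] at h2
    exact he₀ h2
  obtain ⟨q, σ, S, hσ, hSS, hS, hSM⟩ := exists_irreducible_sub _ M hMinv hM0
  replace hS : ∀ k, S * (σ k).val = (τ (1, k)).val * S := hS
  have hSM' : ∀ j : Fin q, ∃ D : Matrix (Fin n) (Fin p) ℂ,
      (∀ g, D * (ρ g).val = (τ (g, 1)).val * D) ∧ D *ᵥ e₀ = fun i => S i j := by
    intro j
    obtain ⟨D, hD, hDe⟩ := hSM (Pi.single j 1)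
    exact ⟨D, hD, by rw [hDe]; ext i; simp⟩
  choose D hD hDe using hSM'
  have hDσ : ∀ k j, (τ (1, k)).val * D j = ∑ l, (σ k).val l j • D l := by
    intro k j
    rw [← sub_eq_zero]
    apply heval
    · intro g
      rw [Matrix.sub_mul, Matrix.mul_sub, Matrix.mul_assoc, hD, ← Matrix.mul_assoc, ← hcomm,
        Matrix.mul_assoc, Matrix.sum_mul, Matrix.mul_sum]
      congr 1
      refine Finset.sum_congr rfl fun l _ => ?_
      rw [Matrix.smul_mul, Matrix.mul_smul, hD]
    · rw [Matrix.sub_mulVec, ← Matrix.mulVec_mulVec, Matrix.sum_mulVec, hDe, sub_eq_zero]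
      ext i
      have h1 := congrFun (congrFun (hS k) i) j
      simp only [Matrix.smul_mulVec, hDe]
      rw [Matrix.mul_apply, Matrix.mul_apply] at h1
      simp only [Finset.sum_apply, Pi.smul_apply, smul_eq_mul]
      rw [show ((τ (1, k)).val *ᵥ fun i => S i j) i = ∑ l, (τ (1, k)).val i l * S l j from rfl,
        ← h1]
      exact Finset.sum_congr rfl fun l _ => mul_comm _ _
  -- the intertwiner `e_a ⊗ e_j ↦ D_j e_a`
  let A : Matrix (Fin n) (Fin (p * q)) ℂ := Matrix.of fun i x =>
    D ((tensorIdx rfl).symm x).2 i ((tensorIdx rfl).symm x).1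
  have hA0 : A ≠ 0 := by
    intro h0
    have hD0 : ∀ j, D j = 0 := by
      intro j
      ext i a
      have := congrFun (congrFun h0 i) (tensorIdx rfl (a, j))
      simpa [A] using this
    have hS0 : S = 0 := by
      ext i j
      have := congrFun (hDe j) i
      rw [hD0, Matrix.zero_mulVec] at this
      exact this.symm
    rw [hS0, Matrix.mul_zero] at hSS
    have := congrFun (congrFun hSS ⟨0, hσ.1⟩) ⟨0, hσ.1⟩
    simp at this
  have hA : ∀ x, A * (extTensor ρ σ x).val = (τ x).val * A := by
    rintro ⟨g, k⟩
    ext i y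
    obtain ⟨⟨a, j⟩, rfl⟩ := (tensorIdx (rfl : p * q = p * q)).surjective y
    have hval := transport_extTensor_val rfl ρ σ (g, k)
    change (extTensor ρ σ (g, k)).val = _ at hval
    have hR : ((τ (g, k)).val * A) i (tensorIdx rfl (a, j)) = ((τ (g, k)).val * D j) i a := by
      simp [Matrix.mul_apply, A]
    have hcol : (τ (g, k)).val * D j = ∑ l, (σ k).val l j • (D l * (ρ g).val) := by
      rw [hsplit, Matrix.mul_assoc, hDσ, Matrix.mul_sum]
      refine Finset.sum_congr rfl fun l _ => ?_
      rw [Matrix.mul_smul, hD]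
    rw [hR, hcol, hval, Matrix.mul_apply, ← (tensorIdx (rfl : p * q = p * q)).sum_comp,
      Fintype.sum_prod_type_right, Matrix.sum_apply]
    refine Finset.sum_congr rfl fun l _ => ?_
    rw [Matrix.smul_apply, Matrix.mul_apply, smul_eq_mul, Finset.mul_sum]
    refine Finset.sum_congr rfl fun b _ => ?_
    simp only [A, Matrix.of_apply, Equiv.symm_apply_apply, Matrix.submatrix_apply,
      Matrix.kroneckerMap_apply]
    ring
  obtain ⟨h, he⟩ := schur_equiv (extTensor_irreducible hρ hσ) hτ A hA0 hA
  exact ⟨p, q, h, ρ, σ, hρ, hσ, he⟩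

end Tensor

/-- The external tensor product induces a bijection from the disjoint
union, over pairs `(p, q)` of positive integers with `p * q = n`, of products of
unitary-equivalence classes of irreducible representations of `G` and of `H`, onto the
set of unitary-equivalence classes of irreducible `n`-dimensional unitary
representations of `G × H`. -/
theorem extTensor_bijection_on_classes (G H : Type*) [Group G] [Group H] (n : ℕ)
    (hn : 1 ≤ n) :
    ∃ f : (Σ pq : {x : ℕ × ℕ // 0 < x.1 ∧ 0 < x.2 ∧ x.1 * x.2 = n},
            IrrClass G pq.1.1 × IrrClass H pq.1.2) → RepClass (G × H) n,
      (∀ (pq : {x : ℕ × ℕ // 0 < x.1 ∧ 0 < x.2 ∧ x.1 * x.2 = n})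
         (ρ : IrrRep G pq.1.1) (σ : IrrRep H pq.1.2),
          f ⟨pq, (Quot.mk _ ρ, Quot.mk _ σ)⟩ =
            Quot.mk _ (transportRep pq.2.2.2 (extTensor ρ.1 σ.1))) ∧
      Function.Injective f ∧
      Set.range f = {c : RepClass (G × H) n |
        ∃ τ : (G × H) →* Matrix.unitaryGroup (Fin n) ℂ,
          RepIrreducible τ ∧ c = Quot.mk _ τ} := by
  let f : (Σ pq : {x : ℕ × ℕ // 0 < x.1 ∧ 0 < x.2 ∧ x.1 * x.2 = n},
      IrrClass G pq.1.1 × IrrClass H pq.1.2) → RepClass (G × H) n := fun z =>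
    Quot.lift₂ (fun (ρ : IrrRep G z.1.1.1) (σ : IrrRep H z.1.1.2) =>
        (Quot.mk _ (transportRep z.1.2.2.2 (extTensor ρ.1 σ.1)) : RepClass (G × H) n))
      (fun ρ _ _ h => Quot.sound
        (extTensor_congr z.1.2.2.2 ((unitaryEquiv_equivalence _).refl ρ.1) h))
      (fun _ _ σ h => Quot.sound
        (extTensor_congr z.1.2.2.2 h ((unitaryEquiv_equivalence _).refl σ.1)))
      z.2.1 z.2.2
  refine ⟨f, fun _ _ _ => rfl, ?_, ?_⟩
  · rintro ⟨⟨⟨p, q⟩, hp, hq, h⟩, a, b⟩ ⟨⟨⟨p', q'⟩, hp', hq', h'⟩, a', b'⟩ hf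
    obtain ⟨ρ, rfl⟩ := Quot.exists_rep a
    obtain ⟨σ, rfl⟩ := Quot.exists_rep b
    obtain ⟨ρ', rfl⟩ := Quot.exists_rep a'
    obtain ⟨σ', rfl⟩ := Quot.exists_rep b'
    have he : UnitarilyEquivalent (transportRep h (extTensor ρ.1 σ.1))
        (transportRep h' (extTensor ρ'.1 σ'.1)) :=
      (unitaryEquiv_equivalence n).eqvGen_iff.1 (Quot.eqvGen_exact hf)
    obtain ⟨⟨e₁, h₁⟩, ⟨e₂, h₂⟩⟩ := extTensor_factors_unique h h' ρ.2 σ.2 ρ'.2 σ'.2 he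
    dsimp only at e₁ e₂
    subst e₁ e₂
    have k₁ : (Quot.mk _ ρ : IrrClass G p) = Quot.mk _ ρ' := Quot.sound h₁
    have k₂ : (Quot.mk _ σ : IrrClass H q) = Quot.mk _ σ' := Quot.sound h₂
    exact congrArg₂ (fun (x : IrrClass G p) (y : IrrClass H q) =>
      (⟨⟨⟨p, q⟩, hp, hq, h⟩, x, y⟩ : Σ pq : {x : ℕ × ℕ // 0 < x.1 ∧ 0 < x.2 ∧ x.1 * x.2 = n},
        IrrClass G pq.1.1 × IrrClass H pq.1.2)) k₁ k₂
  · ext c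
    constructor
    · rintro ⟨⟨⟨⟨p, q⟩, hp, hq, h⟩, a, b⟩, rfl⟩
      obtain ⟨ρ, rfl⟩ := Quot.exists_rep a
      obtain ⟨σ, rfl⟩ := Quot.exists_rep b
      exact ⟨_, transportRep_irreducible h (extTensor_irreducible ρ.2 σ.2), rfl⟩
    · rintro ⟨τ, hτ, rfl⟩
      obtain ⟨p, q, h, ρ, σ, hρ, hσ, he⟩ := exists_extTensor_equiv hτ
      exact ⟨⟨⟨(p, q), hρ.1, hσ.1, h⟩, Quot.mk _ ⟨ρ, hρ⟩, Quot.mk _ ⟨σ, hσ⟩⟩, Quot.sound he⟩
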